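/- Let X₁,...,X_N be i.i.d. with density f w.r.t. λ satisfying condition H(p): (∫|f_k|^{2p}dλ)^{1/p} ≤ c_k∫|f_k|²dλ and (∫ f^q dλ)^{1/q} ≤ c, where 1/p+1/q=1, and set C_k = c_k c, D_k = ∫ f_k² dλ. Then for any ε > 0, with probability at least 1 − ε, simultaneously for all k ∈ {1,...,m}: |(1/N)∑_{i=1}^N f_k(X_i) − E[f_k(X)]| ≤ 2√((1+log(2m/ε))·((1/N)∑_{i=1}^N f_k(X_i)² + C_k D_k)/N). -/

import Mathlib

open MeasureTheory

lemma ofReal_integral_le_lintegral_ofReal {α : Type*} [MeasurableSpace α] {μ : Measure α}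
    {f : α → ℝ} (hf : Integrable f μ) :
    ENNReal.ofReal (∫ x, f x ∂μ) ≤ ∫⁻ x, ENNReal.ofReal (f x) ∂μ := by
  rw [integral_eq_lintegral_pos_part_sub_lintegral_neg_part hf]
  exact (ENNReal.ofReal_le_ofReal (sub_le_self _ ENNReal.toReal_nonneg)).trans
    ENNReal.ofReal_toReal_le

lemma lintegral_Ioi_ofReal_exp_neg :
    ∫⁻ t in Set.Ioi (0 : ℝ), ENNReal.ofReal (Real.exp (-t)) = 1 := by
  rw [← ofReal_integral_eq_lintegral_ofReal (integrableOn_exp_neg_Ioi 0)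
    (Filter.Eventually.of_forall fun t => (Real.exp_pos _).le), integral_exp_neg_Ioi_zero,
    ENNReal.ofReal_one]

section Rademacher

variable {ι : Type*} [Fintype ι] [DecidableEq ι]

lemma sum_exp_signs_le (d : ι → ℝ) :
    ∑ σ : ι → Bool, Real.exp (∑ i, if σ i then -d i else d i)
      ≤ 2 ^ Fintype.card ι * Real.exp ((∑ i, d i ^ 2) / 2) := by
  have h := Finset.prod_univ_sum (fun _ : ι => (Finset.univ : Finset Bool))
    (fun i b => Real.exp (if b then -d i else d i))
  rw [Fintype.piFinset_univ] at h
  simp_rw [Real.exp_sum]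
  rw [← h, Finset.sum_div, Real.exp_sum, ← Finset.card_univ, ← Finset.prod_const,
    ← Finset.prod_mul_distrib]
  refine Finset.prod_le_prod (fun i _ => by positivity) fun i _ => ?_
  have := Real.cosh_le_exp_half_sq (d i)
  rw [Real.cosh_eq] at this
  simp only [Fintype.sum_bool, if_true, Bool.false_eq_true, if_false]
  linarith

lemma sum_cosh_signs_le (d : ι → ℝ) :
    ∑ σ : ι → Bool, Real.cosh (∑ i, if σ i then -d i else d i)
      ≤ 2 ^ Fintype.card ι * Real.exp ((∑ i, d i ^ 2) / 2) := by
  have h1 := sum_exp_signs_le d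
  have h2 := sum_exp_signs_le (fun i => -d i)
  have h3 : ∀ σ : ι → Bool, (∑ i, if σ i then -(-d i) else -d i)
      = -∑ i, if σ i then -d i else d i := by
    intro σ
    rw [← Finset.sum_neg_distrib]
    refine Finset.sum_congr rfl fun i _ => ?_
    split_ifs <;> rfl
  simp only [h3, neg_sq] at h2
  simp_rw [Real.cosh_eq]
  rw [← Finset.sum_div, Finset.sum_add_distrib]
  linarith

end Rademacher

section Symmetrization

variable {X ι : Type*} [MeasurableSpace X] [Fintype ι] {P : Measure X} [IsProbabilityMeasure P]

/-- Exchange the two components of the pairs whose index is selected by `σ`. -/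
def swapWhere (σ : ι → Bool) (z : ι → X × X) : ι → X × X :=
  fun i => if σ i then (z i).swap else z i

lemma measurePreserving_swapWhere (σ : ι → Bool) :
    MeasurePreserving (swapWhere σ) (Measure.pi fun _ : ι => P.prod P)
      (Measure.pi fun _ : ι => P.prod P) := by
  refine measurePreserving_pi (fun _ : ι => P.prod P) (fun _ : ι => P.prod P)
    (f := fun i w => if σ i then w.swap else w) fun i => ?_
  cases σ i
  · exact MeasurePreserving.id _
  · exact Measure.measurePreserving_swap

lemma lintegral_le_of_sum_swapWhere_le [DecidableEq ι] {K : (ι → X × X) → ℝ}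
    (hK : Measurable K) (hK0 : ∀ z, 0 ≤ K z) {B : ℝ}
    (hB : ∀ z, ∑ σ : ι → Bool, K (swapWhere σ z) ≤ 2 ^ Fintype.card ι * B) :
    ∫⁻ z, ENNReal.ofReal (K z) ∂(Measure.pi fun _ : ι => P.prod P) ≤ ENNReal.ofReal B := by
  set μ := Measure.pi fun _ : ι => P.prod P
  have hσ : ∀ σ, ∫⁻ z, ENNReal.ofReal (K (swapWhere σ z)) ∂μ = ∫⁻ z, ENNReal.ofReal (K z) ∂μ :=
    fun σ => (measurePreserving_swapWhere σ).lintegral_comp hK.ennreal_ofReal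
  have h : (2 : ENNReal) ^ Fintype.card ι * ∫⁻ z, ENNReal.ofReal (K z) ∂μ
      ≤ 2 ^ Fintype.card ι * ENNReal.ofReal B := by
    calc (2 : ENNReal) ^ Fintype.card ι * ∫⁻ z, ENNReal.ofReal (K z) ∂μ
        = ∑ σ : ι → Bool, ∫⁻ z, ENNReal.ofReal (K (swapWhere σ z)) ∂μ := by
          simp [hσ]
      _ = ∫⁻ z, ∑ σ : ι → Bool, ENNReal.ofReal (K (swapWhere σ z)) ∂μ :=
          (lintegral_finsetSum _ fun σ _ =>
            (hK.comp (measurePreserving_swapWhere (P := P) σ).measurable).ennreal_ofReal).symm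
      _ ≤ ∫⁻ _, 2 ^ Fintype.card ι * ENNReal.ofReal B ∂μ := by
          refine lintegral_mono fun z => ?_
          rw [← ENNReal.ofReal_sum_of_nonneg fun σ _ => hK0 _]
          refine (ENNReal.ofReal_le_ofReal (hB z)).trans_eq ?_
          rw [ENNReal.ofReal_mul (by positivity), ENNReal.ofReal_pow (by norm_num)]
          simp
      _ = 2 ^ Fintype.card ι * ENNReal.ofReal B := by simp [μ]
  exact (ENNReal.mul_le_mul_iff_right (by positivity) (by finiteness)).1 h

/-- Sub-Gaussian tail of the self-normalized sum of symmetrized variables. -/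
lemma measure_selfNormalized_ge_le {g : X → ℝ} (hg : Measurable g) {s : ℝ} (hs : 0 ≤ s) :
    (Measure.pi fun _ : ι => P.prod P)
      {z | 0 < ∑ i, (g (z i).1 - g (z i).2) ^ 2 ∧
        2 * s * ∑ i, (g (z i).1 - g (z i).2) ^ 2 ≤ (∑ i, (g (z i).1 - g (z i).2)) ^ 2}
      ≤ ENNReal.ofReal (2 * Real.exp (-s)) := by
  classical
  set S : (ι → X × X) → ℝ := fun z => ∑ i, (g (z i).1 - g (z i).2) ^ 2 with hS
  set D : (ι → X × X) → ℝ := fun z => ∑ i, (g (z i).1 - g (z i).2) with hD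
  have hSm : Measurable S := by fun_prop
  have hDm : Measurable D := by fun_prop
  have hS0 : ∀ z, 0 ≤ S z := fun z => Finset.sum_nonneg fun i _ => sq_nonneg _
  set K : (ι → X × X) → ℝ := fun z =>
    2 * Real.exp (-(2 * s)) * Real.cosh (√(2 * s) / √(S z) * D z) with hK
  have hKm : Measurable K :=
    (Real.measurable_cosh.comp ((measurable_const.div hSm.sqrt).mul hDm)).const_mul _
  have hcK : ∀ z ∈ {z | 0 < S z ∧ 2 * s * S z ≤ D z ^ 2}, 1 ≤ K z := by
    rintro z ⟨hz, hz'⟩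
    set u := √(2 * s) / √(S z) * D z with hu
    have hsq : (2 * s) ^ 2 ≤ u ^ 2 := by
      rw [hu, mul_pow _ (D z), div_pow, Real.sq_sqrt (by positivity), Real.sq_sqrt hz.le,
        div_mul_eq_mul_div, le_div_iff₀ hz]
      nlinarith
    have habs : 2 * s ≤ |u| := by
      simpa [abs_of_nonneg hs] using sq_le_sq.1 hsq
    have hcosh : Real.exp (2 * s) ≤ 2 * Real.cosh u := by
      rw [← Real.cosh_abs, Real.cosh_eq]
      have := Real.exp_le_exp.2 habs
      have := Real.exp_pos (-|u|)
      linarith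
    calc (1 : ℝ) = Real.exp (-(2 * s)) * Real.exp (2 * s) := by
          rw [← Real.exp_add, neg_add_cancel, Real.exp_zero]
      _ ≤ Real.exp (-(2 * s)) * (2 * Real.cosh u) := by gcongr
      _ = K z := by simp only [hK, hu]; ring
  refine le_trans ?_ (lintegral_le_of_sum_swapWhere_le (P := P) hKm (fun z => by positivity)
    (B := 2 * Real.exp (-s)) fun z => ?_)
  · refine le_trans (measure_mono fun z hz => ?_)
      ((one_mul _).symm.trans_le (mul_meas_ge_le_lintegral hKm.ennreal_ofReal 1))
    exact ENNReal.one_le_ofReal.2 (hcK z hz)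
  · set d : ι → ℝ := fun i => g (z i).1 - g (z i).2 with hd
    set r : ℝ := √(2 * s) / √(S z) with hr
    have hSσ : ∀ σ, S (swapWhere σ z) = S z := by
      intro σ
      refine Finset.sum_congr rfl fun i _ => ?_
      unfold swapWhere
      split_ifs
      · simp only [Prod.fst_swap, Prod.snd_swap]; ring
      · rfl
    have hDσ : ∀ σ, r * D (swapWhere σ z)
        = ∑ i, if σ i then -(r * d i) else r * d i := by
      intro σ
      simp only [hD, Finset.mul_sum]
      refine Finset.sum_congr rfl fun i _ => ?_
      unfold swapWhere
      split_ifs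
      · simp only [Prod.fst_swap, Prod.snd_swap, hd]; ring
      · rfl
    have hrS : ∑ i, (r * d i) ^ 2 ≤ 2 * s := by
      have : ∑ i, (r * d i) ^ 2 = r ^ 2 * S z := by
        simp only [mul_pow, hS, Finset.mul_sum, hd]
      rw [this, hr, div_pow, Real.sq_sqrt (by positivity), Real.sq_sqrt (hS0 z)]
      rcases (hS0 z).eq_or_lt with h0 | h0
      · rw [← h0, mul_zero]
        positivity
      · rw [div_mul_cancel₀ _ h0.ne']
    have hsum := sum_cosh_signs_le fun i => r * d i
    calc ∑ σ : ι → Bool, K (swapWhere σ z)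
        = 2 * Real.exp (-(2 * s)) *
            ∑ σ : ι → Bool, Real.cosh (∑ i, if σ i then -(r * d i) else r * d i) := by
          simp only [hK, hSσ, Finset.mul_sum]
          refine Finset.sum_congr rfl fun σ _ => ?_
          rw [← hr, hDσ]
      _ ≤ 2 * Real.exp (-(2 * s)) * (2 ^ Fintype.card ι * Real.exp s) := by
          gcongr
          refine hsum.trans ?_
          gcongr
          linarith
      _ = 2 ^ Fintype.card ι * (2 * Real.exp (-s)) := by
          rw [show -s = -(2 * s) + s by ring, Real.exp_add]
          ring

/-- Excess over `L` of the normalized square of the symmetrized sum. -/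
lemma lintegral_ofReal_selfNormalized_sub_le {g : X → ℝ} (hg : Measurable g) {L : ℝ}
    (hL : 0 ≤ L) :
    ∫⁻ z : ι → X × X, ENNReal.ofReal ((∑ i, (g (z i).1 - g (z i).2)) ^ 2 /
        (4 * ∑ i, (g (z i).1 ^ 2 + g (z i).2 ^ 2)) - L) ∂(Measure.pi fun _ : ι => P.prod P)
      ≤ ENNReal.ofReal (2 * Real.exp (-L)) := by
  set μ := Measure.pi fun _ : ι => P.prod P
  set F : (ι → X × X) → ℝ := fun z => (∑ i, (g (z i).1 - g (z i).2)) ^ 2 /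
        (4 * ∑ i, (g (z i).1 ^ 2 + g (z i).2 ^ 2)) - L with hF
  have hFm : Measurable F := by fun_prop
  have hmax : ∀ z, ENNReal.ofReal (F z) = ENNReal.ofReal (max (F z) 0) := fun z => by
    rw [ENNReal.ofReal_max, ENNReal.ofReal_zero, max_eq_left zero_le]
  calc ∫⁻ z, ENNReal.ofReal (F z) ∂μ
      = ∫⁻ t in Set.Ioi (0 : ℝ), μ {z | t ≤ max (F z) 0} := by
        simp_rw [hmax]
        exact lintegral_eq_lintegral_meas_le μ
          (Filter.Eventually.of_forall fun z => le_max_right _ _)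
          (hFm.max measurable_const).aemeasurable
    _ ≤ ∫⁻ t in Set.Ioi (0 : ℝ), ENNReal.ofReal (2 * Real.exp (-L)) *
          ENNReal.ofReal (Real.exp (-t)) := by
        refine setLIntegral_mono (by fun_prop) fun t ht => ?_
        rw [← ENNReal.ofReal_mul (by positivity), mul_assoc, ← Real.exp_add, ← neg_add]
        have ht0 : 0 < t := ht
        refine (measure_mono fun z hz => ?_).trans
          (measure_selfNormalized_ge_le (P := P) hg (s := L + t) (by positivity))
        have hFz : t ≤ F z := (le_max_iff.1 hz).resolve_right (not_le.2 ht0)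
        set S := ∑ i, (g (z i).1 - g (z i).2) ^ 2 with hS
        set D := ∑ i, (g (z i).1 - g (z i).2) with hD
        set Q := ∑ i, (g (z i).1 ^ 2 + g (z i).2 ^ 2) with hQ
        have hSQ : S ≤ 2 * Q := by
          rw [hS, hQ, Finset.mul_sum]
          exact Finset.sum_le_sum fun i _ => by nlinarith [sq_nonneg (g (z i).1 + g (z i).2)]
        have hratio : L + t ≤ D ^ 2 / (4 * Q) := by
          have : F z = D ^ 2 / (4 * Q) - L := rfl
          linarith
        have hQ0 : 0 ≤ Q := Finset.sum_nonneg fun i _ => by positivity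
        have hQpos : 0 < Q := by
          refine hQ0.lt_of_ne fun h => ?_
          rw [← h] at hratio
          simp only [mul_zero, div_zero] at hratio
          linarith
        rw [le_div_iff₀ (by positivity)] at hratio
        have hDpos : 0 < D ^ 2 := lt_of_lt_of_le (by positivity) hratio
        refine ⟨?_, by nlinarith [mul_le_mul_of_nonneg_left hSQ (by positivity : 0 ≤ L + t)]⟩
        have hDS : D ^ 2 ≤ Fintype.card ι * S := sq_sum_le_card_mul_sum_sq
        exact pos_of_mul_pos_right (hDpos.trans_le hDS) (Nat.cast_nonneg _)
    _ = ENNReal.ofReal (2 * Real.exp (-L)) := by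
        rw [lintegral_const_mul _ (by fun_prop), lintegral_Ioi_ofReal_exp_neg, mul_one]

/-- Two-sided deviation bound for sums of independent copies of a square integrable function,
with random normalization. -/
lemma measure_sum_deviation_le {g : X → ℝ} (hg : Measurable g)
    (hg2 : Integrable (fun x => g x ^ 2) P) {L : ℝ} (hL : 0 ≤ L) :
    (Measure.pi fun _ : ι => P)
      {ω | 4 * (1 + L) * (∑ i, g (ω i) ^ 2 + Fintype.card ι * ∫ x, g x ^ 2 ∂P)
        < (∑ i, g (ω i) - Fintype.card ι * ∫ x, g x ∂P) ^ 2}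
      ≤ ENNReal.ofReal (2 * Real.exp (-L)) := by
  set μ := Measure.pi fun _ : ι => P
  set D : (ι → X) → (ι → X) → ℝ := fun ω ω' => ∑ i, (g (ω i) - g (ω' i)) with hD
  set Q : (ι → X) → (ι → X) → ℝ := fun ω ω' => ∑ i, (g (ω i) ^ 2 + g (ω' i) ^ 2) with hQ
  set h : (ι → X) × (ι → X) → ENNReal := fun w =>
    ENNReal.ofReal (D w.1 w.2 ^ 2 / (4 * Q w.1 w.2) - L) with hh
  have hhm : Measurable h := by fun_prop
  have hg1 : Integrable g P :=
    ((memLp_two_iff_integrable_sq hg.aestronglyMeasurable).2 hg2).integrable (by norm_num)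
  have hint : ∀ {φ : X → ℝ}, Integrable φ P → ∀ i, Integrable (fun ω : ι → X => φ (ω i)) μ :=
    fun hφ i => (measurePreserving_eval (fun _ : ι => P) i).integrable_comp_of_integrable hφ
  have hval : ∀ {φ : X → ℝ}, Integrable φ P → ∀ i, ∫ ω : ι → X, φ (ω i) ∂μ = ∫ x, φ x ∂P :=
    fun hφ i => by
      have hmp := measurePreserving_eval (fun _ : ι => P) i
      rw [← hmp.map_eq, integral_map hmp.measurable.aemeasurable
        (by rw [hmp.map_eq]; exact hφ.aestronglyMeasurable)]
  have hle : ∫⁻ ω, ∫⁻ ω', h (ω, ω') ∂μ ∂μ ≤ ENNReal.ofReal (2 * Real.exp (-L)) := by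
    rw [← lintegral_prod _ hhm.aemeasurable,
      ← (measurePreserving_arrowProdEquivProdArrow X X ι (fun _ => P)
        (fun _ => P)).lintegral_comp hhm]
    exact lintegral_ofReal_selfNormalized_sub_le hg hL
  refine le_trans (le_trans (measure_mono fun ω hω => ?_) ((one_mul _).symm.trans_le
    (mul_meas_ge_le_lintegral hhm.lintegral_prod_right' 1))) hle
  simp only [Set.mem_ofPred_eq] at hω ⊢
  set M := ∑ i, g (ω i) ^ 2 + Fintype.card ι * ∫ x, g x ^ 2 ∂P with hM
  set A := ∑ i, g (ω i) - Fintype.card ι * ∫ x, g x ∂P with hA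
  have hM0 : 0 ≤ M := add_nonneg (Finset.sum_nonneg fun i _ => sq_nonneg _)
    (mul_nonneg (Nat.cast_nonneg _) (integral_nonneg fun x => sq_nonneg _))
  have hDterm : ∀ i, Integrable (fun ω' : ι → X => g (ω i) - g (ω' i)) μ :=
    fun i => (integrable_const _).sub (hint hg1 i)
  have hQterm : ∀ i, Integrable (fun ω' : ι → X => g (ω i) ^ 2 + g (ω' i) ^ 2) μ :=
    fun i => (integrable_const _).add (hint hg2 i)
  have hDi : Integrable (D ω) μ := integrable_finsetSum _ fun i _ => hDterm i
  have hQi : Integrable (Q ω) μ := integrable_finsetSum _ fun i _ => hQterm i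
  have hDv : ∫ ω', D ω ω' ∂μ = A := by
    simp only [hD]
    rw [integral_finsetSum _ fun i _ => hDterm i]
    simp_rw [integral_sub (integrable_const _) (hint hg1 _), hval hg1]
    simp [μ, hA]
  have hQv : ∫ ω', Q ω ω' ∂μ = M := by
    simp only [hQ]
    rw [integral_finsetSum _ fun i _ => hQterm i]
    simp_rw [integral_add (integrable_const _) (hint hg2 _), hval hg2]
    simp [μ, hM, Finset.sum_add_distrib]
  obtain ⟨r, hr⟩ : ∃ r : ℝ, 1 + L ≤ r * A - r ^ 2 * M := by
    rcases hM0.eq_or_lt with hM0 | hM0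
    · have hA0 : A ≠ 0 := by
        rintro hA0
        simp [← hM0, hA0] at hω
      exact ⟨(1 + L) / A, by rw [div_mul_cancel₀ _ hA0, ← hM0]; simp⟩
    · refine ⟨A / (2 * M), ?_⟩
      have : A / (2 * M) * A - (A / (2 * M)) ^ 2 * M = A ^ 2 / (4 * M) := by
        field_simp
        ring
      rw [this, le_div_iff₀ (by positivity)]
      linarith
  have hpt : ∀ ω', r * D ω ω' - r ^ 2 * Q ω ω' - L ≤ D ω ω' ^ 2 / (4 * Q ω ω') - L := by
    intro ω'
    have hQ0 : 0 ≤ Q ω ω' := Finset.sum_nonneg fun i _ => by positivity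
    gcongr
    rcases hQ0.eq_or_lt with hQ0 | hQ0
    · have hz := (Finset.sum_eq_zero_iff_of_nonneg fun i _ => by positivity).1 hQ0.symm
      have hD0 : D ω ω' = 0 := by
        refine Finset.sum_eq_zero fun i hi => ?_
        have := hz i hi
        have h1 : g (ω i) = 0 := by nlinarith [sq_nonneg (g (ω i)), sq_nonneg (g (ω' i))]
        have h2 : g (ω' i) = 0 := by nlinarith [sq_nonneg (g (ω i)), sq_nonneg (g (ω' i))]
        rw [h1, h2, sub_zero]
      simp [← hQ0, hD0]
    · rw [le_div_iff₀ (by positivity)]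
      nlinarith [sq_nonneg (D ω ω' - 2 * r * Q ω ω')]
  have hi : Integrable (fun ω' => r * D ω ω' - r ^ 2 * Q ω ω') μ :=
    (hDi.const_mul r).sub (hQi.const_mul (r ^ 2))
  calc (1 : ENNReal) ≤ ENNReal.ofReal (∫ ω', (r * D ω ω' - r ^ 2 * Q ω ω' - L) ∂μ) := by
        rw [integral_sub hi (integrable_const _),
          integral_sub (hDi.const_mul r) (hQi.const_mul (r ^ 2)), integral_const_mul,
          integral_const_mul, hDv, hQv]
        simp only [integral_const, probReal_univ, one_smul]
        exact ENNReal.one_le_ofReal.2 (by linarith)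
    _ ≤ ∫⁻ ω', ENNReal.ofReal (r * D ω ω' - r ^ 2 * Q ω ω' - L) ∂μ :=
        ofReal_integral_le_lintegral_ofReal (hi.sub (integrable_const _))
    _ ≤ ∫⁻ ω', h (ω, ω') ∂μ := lintegral_mono fun ω' => ENNReal.ofReal_le_ofReal (hpt ω')

end Symmetrization

/-- Hölder bound for the second moment of `g` under the law with density `f`. -/
lemma integrable_sq_withDensity_and_integral_le {X : Type*} [MeasurableSpace X] {ν : Measure X}
    {f g : X → ℝ} (hf_nonneg : ∀ x, 0 ≤ f x) (hf_meas : Measurable f) (hg : Measurable g)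
    {p q : ℝ} (hpq : p.HolderConjugate q)
    (hgp : Integrable (fun x => |g x| ^ (2 * p)) ν) (hfq : Integrable (fun x => f x ^ q) ν) :
    Integrable (fun x => g x ^ 2) (ν.withDensity fun x => ENNReal.ofReal (f x)) ∧
      ∫ x, g x ^ 2 ∂(ν.withDensity fun x => ENNReal.ofReal (f x))
        ≤ (∫ x, |g x| ^ (2 * p) ∂ν) ^ (1 / p) * (∫ x, f x ^ q ∂ν) ^ (1 / q) := by
  have hgpow : ∀ x, (g x ^ 2) ^ p = |g x| ^ (2 * p) := fun x => by
    rw [Real.rpow_mul (abs_nonneg _), Real.rpow_two, sq_abs]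
  have hp0 := hpq.pos
  have hq0 := hpq.symm.pos
  have hG : MemLp (fun x => g x ^ 2) (ENNReal.ofReal p) ν := by
    rw [← integrable_norm_rpow_iff (by fun_prop) (by simpa using hp0) ENNReal.ofReal_ne_top,
      ENNReal.toReal_ofReal hp0.le]
    simpa only [Real.norm_eq_abs, abs_sq, hgpow] using hgp
  have hF : MemLp f (ENNReal.ofReal q) ν := by
    rw [← integrable_norm_rpow_iff (by fun_prop) (by simpa using hq0) ENNReal.ofReal_ne_top,
      ENNReal.toReal_ofReal hq0.le]
    simpa only [Real.norm_eq_abs, abs_of_nonneg (hf_nonneg _)] using hfq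
  have hfin : ∀ᵐ x ∂ν, ENNReal.ofReal (f x) < ⊤ :=
    Filter.Eventually.of_forall fun x => ENNReal.ofReal_lt_top
  have hsmul : ∀ x, (ENNReal.ofReal (f x)).toReal • g x ^ 2 = g x ^ 2 * f x := fun x => by
    rw [ENNReal.toReal_ofReal (hf_nonneg x), smul_eq_mul, mul_comm]
  constructor
  · rw [integrable_withDensity_iff_integrable_smul' hf_meas.ennreal_ofReal hfin]
    simp_rw [hsmul]
    have := hpq.ennrealOfReal
    exact MemLp.integrable_mul hG hF
  · rw [integral_withDensity_eq_integral_toReal_smul hf_meas.ennreal_ofReal hfin]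
    simp_rw [hsmul, ← hgpow]
    exact integral_mul_le_Lp_mul_Lq_of_nonneg hpq
      (Filter.Eventually.of_forall fun x => sq_nonneg _)
      (Filter.Eventually.of_forall hf_nonneg) hG hF

/-- Main empirical deviation bound: under condition H(p), with probability at least `1 - ε`,
simultaneously for all `k`,
`|(1/N)∑ f_k(X_i) - E[f_k(X)]| ≤ 2√((1+log(2m/ε))((1/N)∑ f_k(X_i)² + C_k D_k)/N)`. -/
theorem empirical_deviation_bound
    {X : Type*} [MeasurableSpace X] (ν : Measure X) [SigmaFinite ν]
    (f : X → ℝ) (hf_nonneg : ∀ x, 0 ≤ f x) (hf_meas : Measurable f)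
    (P : Measure X) (hP : P = ν.withDensity (fun x => ENNReal.ofReal (f x)))
    [IsProbabilityMeasure P]
    (m N : ℕ) (hm : 0 < m) (hN : 0 < N)
    (fk : Fin m → X → ℝ) (hfk_meas : ∀ k, Measurable (fk k))
    (p q : ℝ) (hp : 1 < p) (hq : 1 < q) (hpq : 1 / p + 1 / q = 1)
    (ck : Fin m → ℝ) (c : ℝ) (hck : ∀ k, 0 < ck k) (hc : 0 < c)
    (hint1 : ∀ k, Integrable (fun x => |fk k x| ^ (2 * p)) ν)
    (hint2 : Integrable (fun x => (f x) ^ q) ν)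
    (hfk2 : ∀ k, Integrable (fun x => (fk k x) ^ 2) ν)
    (hHk : ∀ k, (∫ x, |fk k x| ^ (2 * p) ∂ν) ^ (1 / p) ≤ ck k * ∫ x, |fk k x| ^ (2 : ℝ) ∂ν)
    (hHf : (∫ x, (f x) ^ q ∂ν) ^ (1 / q) ≤ c)
    (ε : ℝ) (hε : 0 < ε) :
    (Measure.pi fun _ : Fin N => P)
      {ω : Fin N → X | ∀ k : Fin m,
        |(1 / (N : ℝ)) * ∑ i, fk k (ω i) - ∫ x, fk k x ∂P|
          ≤ 2 * Real.sqrt ((1 + Real.log (2 * m / ε))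
              * ((1 / (N : ℝ)) * ∑ i, (fk k (ω i)) ^ 2
                  + (ck k * c) * ∫ x, (fk k x) ^ 2 ∂ν) / N)}
      ≥ 1 - ENNReal.ofReal ε := by
  rcases le_or_gt 1 ε with hε1 | hε1
  · rw [tsub_eq_zero_of_le (ENNReal.one_le_ofReal.2 hε1)]
    exact zero_le
  have hm' : (1 : ℝ) ≤ m := by exact_mod_cast hm
  have hN' : (0 : ℝ) < N := by exact_mod_cast hN
  have hratio : 1 ≤ 2 * m / ε := by
    rw [le_div_iff₀ hε]
    linarith
  set L := Real.log (2 * m / ε) with hL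
  have hL0 : 0 ≤ L := Real.log_nonneg hratio
  have hexp : 2 * Real.exp (-L) = ε / m := by
    rw [Real.exp_neg, hL, Real.exp_log (by positivity)]
    field_simp
  have hconj : p.HolderConjugate q :=
    ⟨by simpa [one_div] using hpq, by linarith, by linarith⟩
  have hmoment : ∀ k, Integrable (fun x => fk k x ^ 2) P ∧
      ∫ x, fk k x ^ 2 ∂P ≤ (ck k * c) * ∫ x, fk k x ^ 2 ∂ν := by
    intro k
    obtain ⟨h1, h2⟩ := integrable_sq_withDensity_and_integral_le hf_nonneg hf_meas
      (hfk_meas k) hconj (hint1 k) hint2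
    rw [← hP] at h1 h2
    refine ⟨h1, h2.trans ?_⟩
    have h3 := hHk k
    simp only [Real.rpow_two, sq_abs] at h3
    have h4 : 0 ≤ ck k * ∫ x, fk k x ^ 2 ∂ν :=
      mul_nonneg (hck k).le (integral_nonneg fun x => sq_nonneg _)
    have h5 : 0 ≤ (∫ x, f x ^ q ∂ν) ^ (1 / q) :=
      Real.rpow_nonneg (integral_nonneg fun x => Real.rpow_nonneg (hf_nonneg x) _) _
    calc _ ≤ (ck k * ∫ x, fk k x ^ 2 ∂ν) * c := mul_le_mul h3 hHf h5 h4
      _ = _ := by ring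
  set μ := Measure.pi fun _ : Fin N => P
  set bad : Fin m → Set (Fin N → X) := fun k =>
    {ω | 4 * (1 + L) * (∑ i, fk k (ω i) ^ 2 + Fintype.card (Fin N) * ∫ x, fk k x ^ 2 ∂P)
        < (∑ i, fk k (ω i) - Fintype.card (Fin N) * ∫ x, fk k x ∂P) ^ 2} with hbad
  have hbadμ : μ (⋃ k, bad k) ≤ ENNReal.ofReal ε := by
    calc μ (⋃ k, bad k) ≤ ∑ k, μ (bad k) := measure_iUnion_fintype_le _ _
      _ ≤ ∑ _k : Fin m, ENNReal.ofReal (ε / m) := Finset.sum_le_sum fun k _ => by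
          rw [← hexp]
          exact measure_sum_deviation_le (hfk_meas k) (hmoment k).1 hL0
      _ = ENNReal.ofReal ε := by
          rw [← ENNReal.ofReal_sum_of_nonneg fun _ _ => by positivity]
          congr 1
          simp only [Finset.sum_const, Finset.card_univ, Fintype.card_fin, nsmul_eq_mul]
          field_simp
  have huniv : (1 : ENNReal) ≤ μ (⋃ k, bad k)ᶜ + μ (⋃ k, bad k) := by
    rw [← measure_univ (μ := μ), ← Set.compl_union_self (⋃ k, bad k)]
    exact measure_union_le _ _
  refine le_trans (tsub_le_iff_right.2 (huniv.trans (add_le_add_right hbadμ _)))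
    (measure_mono fun ω hω k => ?_)
  have hk : ω ∉ bad k := fun h => hω (Set.mem_iUnion.2 ⟨k, h⟩)
  simp only [hbad, Set.mem_ofPred_eq, not_lt, Fintype.card_fin] at hk
  have hV := (hmoment k).2
  set V := (ck k * c) * ∫ x, fk k x ^ 2 ∂ν
  have hdev : (∑ i, fk k (ω i) - N * ∫ x, fk k x ∂P) ^ 2
      ≤ 4 * (1 + L) * (∑ i, fk k (ω i) ^ 2 + N * V) := hk.trans (by gcongr)
  have hsq : (1 / (N : ℝ) * ∑ i, fk k (ω i) - ∫ x, fk k x ∂P) ^ 2 / 4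
      ≤ (1 + L) * (1 / (N : ℝ) * ∑ i, fk k (ω i) ^ 2 + V) / N := by
    calc _ = (∑ i, fk k (ω i) - N * ∫ x, fk k x ∂P) ^ 2 / (4 * N ^ 2) := by
          field_simp
      _ ≤ 4 * (1 + L) * (∑ i, fk k (ω i) ^ 2 + N * V) / (4 * N ^ 2) := by gcongr
      _ = _ := by field_simp
  have hhalf : |1 / (N : ℝ) * ∑ i, fk k (ω i) - ∫ x, fk k x ∂P| / 2
      ≤ √((1 + L) * (1 / (N : ℝ) * ∑ i, fk k (ω i) ^ 2 + V) / N) := by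
    refine Real.le_sqrt_of_sq_le ?_
    rw [div_pow, sq_abs]
    norm_num1
    exact hsq
  linarith
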